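/- Let M ≥ 1, let Σ̂ be a Hermitian M×M complex matrix, let Σ̃ be its diagonal-averaged version, and let 𝒮 be any set of Hermitian Toeplitz M×M complex matrices. Then a matrix X₀ ∈ 𝒮 minimizes ‖X − Σ̂‖_F over X ∈ 𝒮 if and only if X₀ minimizes ‖X − Σ̃‖_F over X ∈ 𝒮. In particular, the least-squares fitting problems min_{X∈𝒮} ‖X − Σ̂‖_F² and min_{X∈𝒮} ‖X − Σ̃‖_F² are equivalent. -/

import Mathlib

open Matrix BigOperators

/-- Squared Frobenius norm of a complex matrix. -/
noncomputable def frobNormSq {M : ℕ} (A : Matrix (Fin M) (Fin M) ℂ) : ℝ :=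
  ∑ i : Fin M, ∑ j : Fin M, ‖A i j‖ ^ 2

/-- Frobenius norm of a complex matrix. -/
noncomputable def frobNorm {M : ℕ} (A : Matrix (Fin M) (Fin M) ℂ) : ℝ :=
  Real.sqrt (frobNormSq A)

/-!
The entries of a Toeplitz matrix are constant along diagonals, whereas the entries of `Σ̃ - Σ̂` sum
to zero along each diagonal. Hence, for every Toeplitz `X`, the Toeplitz matrix `X - Σ̃` is
orthogonal to `Σ̃ - Σ̂`, and `‖X - Σ̂‖² = ‖X - Σ̃‖² + ‖Σ̃ - Σ̂‖²`: the two objectives differ by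
a constant.
-/

section FiberAverage

variable {ι κ E : Type*} [Fintype ι] [DecidableEq κ]

section Module

variable [AddCommMonoid E] [Module ℝ E]

/-- The average of the family `a` over the fiber of `f` through `i`. With `f` the diagonal index of
a matrix position, this is averaging along diagonals. -/
noncomputable def fiberAvg (f : ι → κ) (a : ι → E) (i : ι) : E :=
  (Finset.card {j | f j = f i} : ℝ)⁻¹ • ∑ j with f j = f i, a j

lemma fiberAvg_factorsThrough (f : ι → κ) (a : ι → E) :
    (fiberAvg f a).FactorsThrough f := by
  intro i j hij
  simp only [fiberAvg, hij]

lemma sum_fiber_fiberAvg (f : ι → κ) (a : ι → E) (i : ι) :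
    ∑ j with f j = f i, fiberAvg f a j = ∑ j with f j = f i, a j := by
  have card_ne_zero : (Finset.card {j | f j = f i} : ℝ) ≠ 0 :=
    Nat.cast_ne_zero.2 (Finset.card_ne_zero_of_mem (a := i) (by simp))
  calc ∑ j with f j = f i, fiberAvg f a j
      = ∑ j with f j = f i, fiberAvg f a i :=
        Finset.sum_congr rfl fun j hj =>
          fiberAvg_factorsThrough f a (Finset.mem_filter.1 hj).2
    _ = ∑ j with f j = f i, a j := by
        rw [Finset.sum_const, ← Nat.cast_smul_eq_nsmul ℝ, fiberAvg, smul_inv_smul₀ card_ne_zero]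

end Module

section InnerProductSpace

variable [NormedAddCommGroup E] [InnerProductSpace ℝ E]

lemma sum_inner_fiberAvg_sub_eq_zero {f : ι → κ} {x : ι → E} (hx : x.FactorsThrough f)
    (a : ι → E) : ∑ i, inner ℝ (x i) (fiberAvg f a i - a i) = 0 := by
  rw [← Finset.sum_fiberwise_of_maps_to (t := Finset.univ.image f) (g := f)
    fun i hi => Finset.mem_image_of_mem f hi]
  refine Finset.sum_eq_zero fun k hk => ?_
  obtain ⟨i, -, rfl⟩ := Finset.mem_image.1 hk
  calc ∑ j with f j = f i, inner ℝ (x j) (fiberAvg f a j - a j)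
      = ∑ j with f j = f i, inner ℝ (x i) (fiberAvg f a j - a j) :=
        Finset.sum_congr rfl fun j hj => by rw [hx (Finset.mem_filter.1 hj).2]
    _ = 0 := by
        rw [← inner_sum, Finset.sum_sub_distrib, sum_fiber_fiberAvg, sub_self, inner_zero_right]

lemma sum_norm_sub_sq_eq_add_fiberAvg {f : ι → κ} {x : ι → E} (hx : x.FactorsThrough f)
    (a : ι → E) :
    ∑ i, ‖x i - a i‖ ^ 2 =
      ∑ i, ‖x i - fiberAvg f a i‖ ^ 2 + ∑ i, ‖fiberAvg f a i - a i‖ ^ 2 := by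
  have diff_factors : (x - fiberAvg f a).FactorsThrough f := fun i j hij =>
    congrArg₂ (· - ·) (hx hij) (fiberAvg_factorsThrough f a hij)
  have orthogonal : ∑ i, inner ℝ (x i - fiberAvg f a i) (fiberAvg f a i - a i) = 0 :=
    sum_inner_fiberAvg_sub_eq_zero diff_factors a
  calc ∑ i, ‖x i - a i‖ ^ 2
      = ∑ i, (‖x i - fiberAvg f a i‖ ^ 2
          + 2 * inner ℝ (x i - fiberAvg f a i) (fiberAvg f a i - a i)
          + ‖fiberAvg f a i - a i‖ ^ 2) :=
        Finset.sum_congr rfl fun i _ => by rw [← norm_add_sq_real, sub_add_sub_cancel]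
    _ = ∑ i, ‖x i - fiberAvg f a i‖ ^ 2 + ∑ i, ‖fiberAvg f a i - a i‖ ^ 2 := by
        rw [Finset.sum_add_distrib, Finset.sum_add_distrib, ← Finset.mul_sum, orthogonal,
          mul_zero, add_zero]

end InnerProductSpace

end FiberAverage

section Diagonal

variable {M : ℕ}

/-- The index `j - i` of the diagonal through the matrix position `(i, j)`; it is negative below the
main diagonal. -/
def diagIndex (p : Fin M × Fin M) : ℤ :=
  (p.2 : ℤ) - (p.1 : ℤ)

lemma natAbs_diagIndex_lt (p : Fin M × Fin M) : (diagIndex p).natAbs < M := by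
  grind [diagIndex]

lemma card_diagIndex_eq (d : ℤ) :
    Finset.card {p : Fin M × Fin M | diagIndex p = d} = M - d.natAbs := by
  rw [← Finset.card_range (M - d.natAbs)]
  -- A position on a fixed diagonal is determined by the smaller of its two coordinates.
  refine Finset.card_bij (fun p _ => min (p.1 : ℕ) p.2) ?mapsTo ?injective ?surjective
  case mapsTo =>
    rintro ⟨i, j⟩ hij
    rw [Finset.mem_filter_univ, diagIndex] at hij
    rw [Finset.mem_range]
    dsimp only at hij ⊢
    omega
  case injective =>
    rintro ⟨i, j⟩ hij ⟨k, l⟩ hkl (hmin : min (i : ℕ) j = min (k : ℕ) l)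
    rw [Finset.mem_filter_univ, diagIndex] at hij hkl
    dsimp only at hij hkl
    rw [Prod.mk.injEq, Fin.ext_iff, Fin.ext_iff]
    omega
  case surjective =>
    intro m hm
    rw [Finset.mem_range] at hm
    refine ⟨(⟨m + (-d).toNat, by omega⟩, ⟨m + d.toNat, by omega⟩), ?_, ?_⟩
    · rw [Finset.mem_filter_univ, diagIndex]
      dsimp only
      omega
    · dsimp only
      omega

lemma cast_card_diagIndex_eq {R : Type*} [Ring R] (p : Fin M × Fin M) :
    (Finset.card {q : Fin M × Fin M | diagIndex q = diagIndex p} : R) =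
      (M : R) - (|diagIndex p| : ℤ) := by
  rw [card_diagIndex_eq, Nat.cast_sub (natAbs_diagIndex_lt p).le, Nat.cast_natAbs]

/-- The diagonal-averaged version `Σ̃` of a matrix `Σ̂`, as an average over the fibers of
`diagIndex`. -/
noncomputable def diagAvg (A : Matrix (Fin M) (Fin M) ℂ) : Matrix (Fin M) (Fin M) ℂ :=
  Matrix.of fun i j => fiberAvg diagIndex (Function.uncurry A) (i, j)

lemma diagAvg_apply (A : Matrix (Fin M) (Fin M) ℂ) (i j : Fin M) :
    diagAvg A i j =
      (∑ k : Fin M, ∑ l : Fin M,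
        if (l : ℤ) - (k : ℤ) = (j : ℤ) - (i : ℤ) then A k l else 0)
        / ((M : ℂ) - (|(j : ℤ) - (i : ℤ)| : ℤ)) := by
  have hcard := cast_card_diagIndex_eq (R := ℂ) (i, j)
  rw [diagAvg, Matrix.of_apply, fiberAvg, Complex.real_smul, Complex.ofReal_inv,
    Complex.ofReal_natCast, hcard, inv_mul_eq_div, Finset.sum_filter, Fintype.sum_prod_type]
  rfl

/-- Toeplitz matrices: the entry at `(i, j)` depends only on `j - i`, that is, factors
through `diagIndex`. -/
def IsToeplitz {α : Type*} (A : Matrix (Fin M) (Fin M) α) : Prop :=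
  (Function.uncurry A).FactorsThrough diagIndex

end Diagonal

section Frobenius

variable {M : ℕ}

lemma frobNormSq_eq_sum_prod (A : Matrix (Fin M) (Fin M) ℂ) :
    frobNormSq A = ∑ p : Fin M × Fin M, ‖A p.1 p.2‖ ^ 2 :=
  (Fintype.sum_prod_type' fun i j => ‖A i j‖ ^ 2).symm

lemma frobNormSq_nonneg (A : Matrix (Fin M) (Fin M) ℂ) : 0 ≤ frobNormSq A := by
  unfold frobNormSq
  positivity

lemma frobNorm_le_frobNorm_iff {A B : Matrix (Fin M) (Fin M) ℂ} :
    frobNorm A ≤ frobNorm B ↔ frobNormSq A ≤ frobNormSq B :=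
  Real.sqrt_le_sqrt_iff (frobNormSq_nonneg B)

lemma IsToeplitz.frobNormSq_sub_eq_add {X : Matrix (Fin M) (Fin M) ℂ} (hX : IsToeplitz X)
    (A : Matrix (Fin M) (Fin M) ℂ) :
    frobNormSq (X - A) = frobNormSq (X - diagAvg A) + frobNormSq (diagAvg A - A) := by
  simp only [frobNormSq_eq_sum_prod]
  exact sum_norm_sub_sq_eq_add_fiberAvg hX (Function.uncurry A)

lemma frobNorm_sub_le_iff_diagAvg {X Y : Matrix (Fin M) (Fin M) ℂ} (hX : IsToeplitz X)
    (hY : IsToeplitz Y) (A : Matrix (Fin M) (Fin M) ℂ) :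
    frobNorm (X - A) ≤ frobNorm (Y - A) ↔
      frobNorm (X - diagAvg A) ≤ frobNorm (Y - diagAvg A) := by
  rw [frobNorm_le_frobNorm_iff, frobNorm_le_frobNorm_iff, hX.frobNormSq_sub_eq_add,
    hY.frobNormSq_sub_eq_add, add_le_add_iff_right]

end Frobenius

theorem fit_sample_iff_fit_diag_avg_general (M : ℕ)
    (Sh St : Matrix (Fin M) (Fin M) ℂ)
    (hSt : ∀ i j : Fin M, St i j =
      (∑ k : Fin M, ∑ l : Fin M,
        if (l : ℤ) - (k : ℤ) = (j : ℤ) - (i : ℤ) then Sh k l else 0)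
        / ((M : ℂ) - (|(j : ℤ) - (i : ℤ)| : ℤ)))
    (𝒮 : Set (Matrix (Fin M) (Fin M) ℂ))
    (h𝒮toep : ∀ X ∈ 𝒮, ∀ i j k l : Fin M,
      (j : ℤ) - (i : ℤ) = (l : ℤ) - (k : ℤ) → X i j = X k l)
    (X₀ : Matrix (Fin M) (Fin M) ℂ) (hX₀ : X₀ ∈ 𝒮) :
    (∀ X ∈ 𝒮, frobNorm (X₀ - Sh) ≤ frobNorm (X - Sh)) ↔
      (∀ X ∈ 𝒮, frobNorm (X₀ - St) ≤ frobNorm (X - St)) := by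
  obtain rfl : St = diagAvg Sh := Matrix.ext fun i j => (hSt i j).trans (diagAvg_apply Sh i j).symm
  have toeplitz : ∀ X ∈ 𝒮, IsToeplitz X := fun X hX p q hpq =>
    h𝒮toep X hX p.1 p.2 q.1 q.2 hpq
  exact forall₂_congr fun X hX =>
    frobNorm_sub_le_iff_diagAvg (toeplitz X₀ hX₀) (toeplitz X hX) Sh

/-- Over any set `𝒮` of Hermitian Toeplitz matrices, `X₀ ∈ 𝒮` minimizes `‖X − Σ̂‖_F`
iff it minimizes `‖X − Σ̃‖_F`, where `Σ̃` is the diagonal-averaged version of the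
Hermitian matrix `Σ̂`. -/
theorem fit_sample_iff_fit_diag_avg (M : ℕ) (hM : 1 ≤ M)
    (Sh : Matrix (Fin M) (Fin M) ℂ) (hSh : Sh.IsHermitian)
    (St : Matrix (Fin M) (Fin M) ℂ)
    (hSt : ∀ i j : Fin M, St i j =
      (∑ k : Fin M, ∑ l : Fin M,
        if (l : ℤ) - (k : ℤ) = (j : ℤ) - (i : ℤ) then Sh k l else 0)
        / ((M : ℂ) - (|(j : ℤ) - (i : ℤ)| : ℤ)))
    (𝒮 : Set (Matrix (Fin M) (Fin M) ℂ))
    (h𝒮herm : ∀ X ∈ 𝒮, X.IsHermitian)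
    (h𝒮toep : ∀ X ∈ 𝒮, ∀ i j k l : Fin M,
      (j : ℤ) - (i : ℤ) = (l : ℤ) - (k : ℤ) → X i j = X k l)
    (X₀ : Matrix (Fin M) (Fin M) ℂ) (hX₀ : X₀ ∈ 𝒮) :
    (∀ X ∈ 𝒮, frobNorm (X₀ - Sh) ≤ frobNorm (X - Sh)) ↔
      (∀ X ∈ 𝒮, frobNorm (X₀ - St) ≤ frobNorm (X - St)) := by
  exact fit_sample_iff_fit_diag_avg_general M Sh St hSt 𝒮 h𝒮toep X₀ hX₀
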